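/- Let n ≥ 2 and let V be a 2n-dimensional vector space over the field F₃ with three elements, equipped with a nondegenerate symmetric bilinear form B. Let d be an isometry of B (B(dv, dw) = B(v,w) for all v,w) with d² = 1 whose fixed space has dimension 2n − 1 (a reflection), and let c be an invertible linear map of V with c² = 1 whose +1 and −1 eigenspaces are both totally isotropic with respect to B (hence each of dimension n). Then the subgroup of GL(V) generated by c and d is a 2-group. -/

import Mathlib

/-!
A reflection `d` is `v ↦ v - f v • a` for a vector `a` and a functional `f` with `f a = 2`. Since
`d` is an isometry, `2 B(v, a) = f v B(a, a)` and nondegeneracy makes `a` anisotropic. Total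
isotropy of the two eigenspaces of the involution `c` means exactly that `c` is skew-adjoint, so
`c a` is orthogonal to `a`. The reflections `d` and `c d c⁻¹`, with roots `a` and `c a`, therefore
commute; they generate a `2`-group, which `c` normalizes by swapping the two generators.
-/



/-- The fixed-point subspace of a linear automorphism `f` of `V`. -/
def fixedSpace {F V : Type*} [Field F] [AddCommGroup V] [Module F V]
    (f : V ≃ₗ[F] V) : Submodule F V :=
  LinearMap.ker (f.toLinearMap - LinearMap.id)

/-- The group of isometries of a bilinear form `B` on `V`: all invertible linear maps
`f : V → V` with `B (f v) (f w) = B v w` for all `v, w`. -/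
def isometryGroup {F V : Type*} [Field F] [AddCommGroup V] [Module F V]
    (B : V →ₗ[F] V →ₗ[F] F) : Subgroup (V ≃ₗ[F] V) where
  carrier := {f | ∀ v w : V, B (f v) (f w) = B v w}
  one_mem' := fun _ _ => rfl
  mul_mem' := by
    intro a b ha hb v w
    show B (a (b v)) (a (b w)) = B v w
    rw [ha, hb]
  inv_mem' := by
    intro a ha v w
    show B (a.symm v) (a.symm w) = B v w
    rw [← ha (a.symm v) (a.symm w), a.apply_symm_apply, a.apply_symm_apply]

/-- A submodule on which the bilinear form `B` vanishes identically; `B` is not assumed symmetric,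
so the condition ranges over all ordered pairs. -/
def IsTotallyIsotropic {R M : Type*} [CommRing R] [AddCommGroup M] [Module R M]
    (B : M →ₗ[R] M →ₗ[R] R) (W : Submodule R M) : Prop :=
  ∀ u ∈ W, ∀ u' ∈ W, B u u' = 0

section Group

variable {G : Type*} [Group G]

theorem isPGroup_zpowers_of_pow_eq_one {p k : ℕ} {g : G} (hg : g ^ p ^ k = 1) :
    IsPGroup p (Subgroup.zpowers g) :=
  IsPGroup.of_card_dvd_pow (Nat.card_zpowers g ▸ orderOf_dvd_of_pow_eq_one hg)

theorem isPGroup_zpowers_sup_zpowers_of_commute {p : ℕ} {g h : G}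
    (hg : IsPGroup p (Subgroup.zpowers g)) (hh : IsPGroup p (Subgroup.zpowers h))
    (hgh : Commute g h) : IsPGroup p ↥(Subgroup.zpowers g ⊔ Subgroup.zpowers h) := by
  refine hg.to_sup_of_normal_right' hh (Subgroup.zpowers_le.2 ?_)
  rw [Subgroup.mem_normalizer_iff_map_conj_eq, MonoidHom.map_zpowers, MonoidHom.coe_coe,
    MulAut.conj_apply, hgh.eq, mul_inv_cancel_right]

theorem mem_normalizer_zpowers_sup_zpowers_conj {c : G} (hc : c ^ 2 = 1) (d : G) :
    c ∈ Subgroup.normalizer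
      (Subgroup.zpowers d ⊔ Subgroup.zpowers (c * d * c⁻¹) : Subgroup G) := by
  have hconj : c * (c * d * c⁻¹) * c⁻¹ = d := by
    calc c * (c * d * c⁻¹) * c⁻¹ = c ^ 2 * d * (c ^ 2)⁻¹ := by
          simp only [sq, mul_inv_rev, mul_assoc]
      _ = d := by simp only [hc, one_mul, inv_one, mul_one]
  rw [Subgroup.mem_normalizer_iff_map_conj_eq, Subgroup.map_sup, MonoidHom.map_zpowers,
    MonoidHom.map_zpowers, MonoidHom.coe_coe, MulAut.conj_apply, MulAut.conj_apply, hconj, sup_comm]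

theorem isPGroup_two_closure_pair_of_commute_conj {c d : G} (hc : c ^ 2 = 1)
    (hd : IsPGroup 2 (Subgroup.zpowers d)) (hcomm : Commute d (c * d * c⁻¹)) :
    IsPGroup 2 (Subgroup.closure {c, d}) := by
  have hconj : IsPGroup 2 (Subgroup.zpowers (c * d * c⁻¹)) := by
    have hmap := hd.map (MulAut.conj c).toMonoidHom
    rwa [MonoidHom.map_zpowers] at hmap
  have hsup := IsPGroup.to_sup_of_normal_right' (isPGroup_zpowers_of_pow_eq_one (k := 1) hc)
    (isPGroup_zpowers_sup_zpowers_of_commute hd hconj hcomm)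
    (Subgroup.zpowers_le.2 (mem_normalizer_zpowers_sup_zpowers_conj hc d))
  refine hsup.to_le ((Subgroup.closure_le _).2 (Set.pair_subset ?_ ?_))
  · exact Subgroup.mem_sup_left (Subgroup.mem_zpowers c)
  · exact Subgroup.mem_sup_right (Subgroup.mem_sup_left (Subgroup.mem_zpowers d))

end Group

section Reflection

variable {R M : Type*} [CommRing R] [AddCommGroup M] [Module R M]
  {x y : M} {f g : Module.Dual R M}

theorem commute_reflection_reflection (hf : f x = 2) (hg : g y = 2) (hfy : f y = 0)
    (hgx : g x = 0) : Commute (Module.reflection hf) (Module.reflection hg) := by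
  ext v
  simp only [LinearEquiv.mul_apply, Module.reflection_apply, map_sub, map_smul, hfy, hgx,
    zero_smul, sub_zero]
  exact sub_right_comm v _ _

theorem conj_reflection (e : M ≃ₗ[R] M) (hf : f x = 2) :
    e * Module.reflection hf * e⁻¹ =
      Module.reflection (x := e x) (f := f ∘ₗ e.symm.toLinearMap) (by simpa using hf) := by
  ext v
  simp [LinearEquiv.mul_apply, Module.reflection_apply]

theorem involutive_of_sq_eq_one {e : M ≃ₗ[R] M} (he : e ^ 2 = 1) : Function.Involutive e := by
  rw [sq] at he
  exact LinearEquiv.congr_fun he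

theorem exists_eq_reflection {K V : Type*} [Field K] [AddCommGroup V] [Module K V]
    {d : V ≃ₗ[K] V} (hd2 : d ^ 2 = 1) (hdfix : Module.finrank K (V ⧸ fixedSpace d) = 1) :
    ∃ (a : V) (f : Module.Dual K V) (h : f a = 2), d = Module.reflection h := by
  have hd : d ∈ LinearEquiv.dilatransvections K V := by
    rw [LinearEquiv.mem_dilatransvections_iff_rank_quotient, LinearMap.fixedSubmodule_eq_ker]
    exact (Module.rank_eq_one_iff_finrank_eq_one.2 hdfix).le
  obtain ⟨f, a, hfa⟩ := hd
  have hd_apply (v : V) : d v = v + f v • a := by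
    rw [← LinearMap.transvection.apply, ← hfa, LinearEquiv.coe_coe]
  obtain ⟨v, hv⟩ : ∃ v, f v • a ≠ 0 := by
    by_contra! hfix
    have htop : fixedSpace d = ⊤ := by
      ext v
      simp [fixedSpace, hd_apply, hfix]
    have := Submodule.Quotient.subsingleton_iff.2 htop
    exact zero_ne_one (Module.finrank_zero_of_subsingleton.symm.trans hdfix)
  have hda : (2 + f a) • f v • a = 0 := by
    have hddv : d (v + f v • a) = v := by rw [← hd_apply, involutive_of_sq_eq_one hd2 v]
    rw [map_add, map_smul, hd_apply, hd_apply] at hddv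
    linear_combination (norm := module) hddv
  have hfa2 : (-f) a = 2 := by
    have hsum : 2 + f a = 0 := (smul_eq_zero.1 hda).resolve_right hv
    rw [LinearMap.neg_apply]
    linear_combination -hsum
  refine ⟨a, -f, hfa2, ?_⟩
  ext v
  rw [hd_apply, Module.reflection_apply, LinearMap.neg_apply, neg_smul, sub_neg_eq_add]

end Reflection

section BilinearForm

variable {R M : Type*} [CommRing R] [AddCommGroup M] [Module R M] {B : M →ₗ[R] M →ₗ[R] R}

theorem two_mul_apply_root_right {a : M} {f : Module.Dual R M} {h : f a = 2}
    (hB : B.IsOrthogonal (Module.reflection h)) (v : M) : 2 * B v a = f v * B a a := by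
  have hva := hB v a
  rw [Module.reflection_apply_self, Module.reflection_apply] at hva
  simp only [map_sub, map_neg, map_smul, LinearMap.sub_apply, LinearMap.smul_apply,
    smul_eq_mul] at hva
  linear_combination -hva

theorem two_mul_apply_root_left {a : M} {f : Module.Dual R M} {h : f a = 2}
    (hB : B.IsOrthogonal (Module.reflection h)) (v : M) : 2 * B a v = f v * B a a :=
  two_mul_apply_root_right (B := B.flip) (fun v w => hB w v) v

variable [NoZeroDivisors R] [NeZero (2 : R)]

theorem apply_root_self_ne_zero {a : M} {f : Module.Dual R M} {h : f a = 2}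
    (hsep : B.SeparatingLeft) (hB : B.IsOrthogonal (Module.reflection h)) : B a a ≠ 0 := by
  intro haa
  have ha : a = 0 := hsep a fun v => by
    simpa [haa, two_ne_zero] using two_mul_apply_root_left hB v
  exact two_ne_zero (α := R) (by rw [← h, ha, map_zero])

theorem isSkewAdjoint_of_isTotallyIsotropic {c : M →ₗ[R] M} (hc : Function.Involutive c)
    (hplus : IsTotallyIsotropic B (LinearMap.ker (c - LinearMap.id)))
    (hminus : IsTotallyIsotropic B (LinearMap.ker (c + LinearMap.id))) :
    B.IsSkewAdjoint c := by
  intro v w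
  have mem_plus (v : M) : v + c v ∈ LinearMap.ker (c - LinearMap.id) := by
    simp [hc v, add_comm]
  have mem_minus (v : M) : v - c v ∈ LinearMap.ker (c + LinearMap.id) := by
    simp [hc v]
  have hp := hplus _ (mem_plus v) _ (mem_plus w)
  have hm := hminus _ (mem_minus v) _ (mem_minus w)
  simp only [map_add, map_sub, LinearMap.add_apply, LinearMap.sub_apply] at hp hm
  refine mul_left_cancel₀ (two_ne_zero (α := R)) ?_
  rw [Pi.neg_apply, map_neg]
  linear_combination hp - hm

theorem coroot_apply_eq_zero_of_isSkewAdjoint {a : M} {f : Module.Dual R M} {h : f a = 2}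
    {c : M → M} (hsep : B.SeparatingLeft) (hB : B.IsOrthogonal (Module.reflection h))
    (hc : B.IsSkewAdjoint c) : f (c a) = 0 := by
  have hskew : B (c a) a = -B a (c a) := by rw [hc a a, Pi.neg_apply, map_neg]
  have hmul : 2 * (f (c a) * B a a) = 0 := by
    linear_combination 2 * hskew - two_mul_apply_root_right hB (c a) -
      two_mul_apply_root_left hB (c a)
  simpa [two_ne_zero, apply_root_self_ne_zero hsep hB] using hmul

end BilinearForm

theorem statement_13_general {K V : Type*} [Field K] [NeZero (2 : K)] [AddCommGroup V] [Module K V]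
    {B : V →ₗ[K] V →ₗ[K] K} (hsep : B.SeparatingLeft)
    {d : V ≃ₗ[K] V} (hdiso : B.IsOrthogonal d) (hd2 : d ^ 2 = 1)
    (hdfix : Module.finrank K (V ⧸ fixedSpace d) = 1)
    {c : V ≃ₗ[K] V} (hc2 : c ^ 2 = 1)
    (hplus : IsTotallyIsotropic B (LinearMap.ker (c.toLinearMap - LinearMap.id)))
    (hminus : IsTotallyIsotropic B (LinearMap.ker (c.toLinearMap + LinearMap.id))) :
    IsPGroup 2 (Subgroup.closure {c, d}) := by
  obtain ⟨a, f, h, rfl⟩ := exists_eq_reflection hd2 hdfix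
  have hcc : Function.Involutive c := involutive_of_sq_eq_one hc2
  have hcsymm : c.symm a = c a := c.symm_apply_eq.2 (hcc a).symm
  have hskew : B.IsSkewAdjoint c := isSkewAdjoint_of_isTotallyIsotropic hcc hplus hminus
  have hfca : f (c a) = 0 := coroot_apply_eq_zero_of_isSkewAdjoint hsep hdiso hskew
  refine isPGroup_two_closure_pair_of_commute_conj hc2
    (isPGroup_zpowers_of_pow_eq_one (k := 1) hd2) ?_
  rw [conj_reflection]
  exact commute_reflection_reflection _ _ hfca (by simpa [hcsymm] using hfca)

/-- **Example in the orthogonal groups over `F₃`.**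
Let `V` be a `2n`-dimensional vector space over `F₃` (`n ≥ 2`) with a nondegenerate
symmetric bilinear form `B`. Let `d` be a reflection in the isometry group of `B` and
`c` an invertible linear map with `c² = 1` whose `±1` eigenspaces are both totally
isotropic. Then the subgroup of `GL(V)` generated by `c` and `d` is a 2-group. -/
theorem statement_13 (n : ℕ) (hn : 2 ≤ n)
    {V : Type*} [AddCommGroup V] [Module (ZMod 3) V] [FiniteDimensional (ZMod 3) V]
    (hdim : Module.finrank (ZMod 3) V = 2 * n)
    (B : V →ₗ[ZMod 3] V →ₗ[ZMod 3] ZMod 3)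
    (hsymm : ∀ v w : V, B v w = B w v)
    (hnondeg : ∀ v : V, (∀ w : V, B v w = 0) → v = 0)
    (d : V ≃ₗ[ZMod 3] V)
    (hdiso : ∀ v w : V, B (d v) (d w) = B v w)
    (hd2 : d ^ 2 = 1)
    (hdfix : Module.finrank (ZMod 3) (fixedSpace d) = 2 * n - 1)
    (c : V ≃ₗ[ZMod 3] V)
    (hc2 : c ^ 2 = 1)
    (hplus : ∀ u ∈ LinearMap.ker (c.toLinearMap - LinearMap.id),
      ∀ u' ∈ LinearMap.ker (c.toLinearMap - LinearMap.id), B u u' = 0)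
    (hminus : ∀ u ∈ LinearMap.ker (c.toLinearMap + LinearMap.id),
      ∀ u' ∈ LinearMap.ker (c.toLinearMap + LinearMap.id), B u u' = 0) :
    IsPGroup 2 ↥(Subgroup.closure {c, d}) :=
  haveI : NeZero (2 : ZMod 3) := ⟨by decide⟩
  statement_13_general hnondeg hdiso hd2
    (by have := (fixedSpace d).finrank_quotient_add_finrank; omega) hc2 hplus hminus
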